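/- arXiv:2302.00393 — 2 statements merged into one kernel-verified Lean document; each statement's English description precedes it below -/
import Mathlib

section
/- Let A > 0 and define v(t,x) = x/(√2 · √(1+t)) and k(t,x) = (A^2 - x^2/(1+t))/4. Then for all t > 0 and all x with |x| < A√(1+t), the pair (v,k) satisfies the turbulence model with β = 1 and η = κ = 1, namely ∂_t v = ∂_x( k ∂_x v ) and ∂_t k = ∂_x( k ∂_x k ) + k (∂_x v)^2; moreover the energy density ½ v(t,x)^2 + k(t,x) equals the constant A^2/4 on this region. -/
/-!
With `S = 1 + t`, the spatial derivatives are `v_x = 1 / (√2 √S)` (constant in `x`) and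
`k_x = -x / (2 S)`, while `v_t = -x / (2 √2 S √S)` and `k_t = x² / (4 S²)`. Hence
`(k v_x)_x = k_x v_x = v_t`, and in `(k k_x)_x + k v_x² = k_x² - k / (2 S) + k / (2 S)` the last
two terms cancel, leaving `k_x² = k_t`. The energy identity is `½ v² = x² / (4 S)`.
-/

/-- The explicit pair `v(t,x) = x/(√2 √(1+t))`, `k(t,x) = (A² - x²/(1+t))/4`
solves the turbulence model with `β = 1`, `η = κ = 1` on the region
`|x| < A √(1+t)`, and there the energy density `½ v² + k` equals `A²/4`. -/
theorem turbulence_exact_self_similar_solution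
    (A : ℝ) (hA : 0 < A)
    (v k : ℝ → ℝ → ℝ)
    (hv : ∀ t x : ℝ, v t x = x / (Real.sqrt 2 * Real.sqrt (1 + t)))
    (hk : ∀ t x : ℝ, k t x = (A ^ 2 - x ^ 2 / (1 + t)) / 4) :
    ∀ t : ℝ, 0 < t → ∀ x : ℝ, |x| < A * Real.sqrt (1 + t) →
      (deriv (fun s : ℝ => v s x) t
          = deriv (fun z : ℝ => k t z * deriv (fun w : ℝ => v t w) z) x)
      ∧ (deriv (fun s : ℝ => k s x) t
          = deriv (fun z : ℝ => k t z * deriv (fun w : ℝ => k t w) z) x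
            + k t x * (deriv (fun w : ℝ => v t w) x) ^ 2)
      ∧ (1 / 2) * (v t x) ^ 2 + k t x = A ^ 2 / 4 := by
  intro t ht x _
  have hS : 0 < 1 + t := by linarith
  have hS0 : (1 + t) ≠ 0 := hS.ne'
  have hq : Real.sqrt (1 + t) ≠ 0 := (Real.sqrt_pos.mpr hS).ne'
  have h2 : Real.sqrt 2 ≠ 0 := by positivity
  have hqq : Real.sqrt (1 + t) ^ 2 = 1 + t := Real.sq_sqrt hS.le
  have h22 : Real.sqrt 2 ^ 2 = 2 := Real.sq_sqrt (by norm_num)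
  have hvx : ∀ z, HasDerivAt (fun w => v t w) (1 / (Real.sqrt 2 * Real.sqrt (1 + t))) z := by
    intro z
    simp only [hv]
    exact (hasDerivAt_id z).div_const _
  have hkx : ∀ z, HasDerivAt (fun w => k t w) (-z / (2 * (1 + t))) z := by
    intro z
    simp only [hk]
    refine ((((hasDerivAt_id z).pow 2).div_const (1 + t)).const_sub (A ^ 2)
      |>.div_const 4).congr_deriv ?_
    simp only [id]
    field_simp
    norm_num
    ring
  have hs : HasDerivAt (fun s : ℝ => 1 + s) 1 t := (hasDerivAt_id t).const_add 1
  have hvt : HasDerivAt (fun s => v s x)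
      (-x / (2 * Real.sqrt 2 * (1 + t) * Real.sqrt (1 + t))) t := by
    simp only [hv]
    refine ((hasDerivAt_const t x).div ((hs.sqrt hS0).const_mul (Real.sqrt 2))
      (mul_ne_zero h2 hq)).congr_deriv ?_
    rw [mul_pow, hqq]
    field_simp
    ring
  have hkt : HasDerivAt (fun s => k s x) (x ^ 2 / (4 * (1 + t) ^ 2)) t := by
    simp only [hk]
    refine ((((hasDerivAt_const t (x ^ 2)).div hs hS0).const_sub (A ^ 2)).div_const 4
      ).congr_deriv ?_
    field_simp
    ring
  have hkxx : HasDerivAt (fun z : ℝ => -z / (2 * (1 + t))) (-1 / (2 * (1 + t))) x :=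
    (hasDerivAt_id x).neg.div_const _
  refine ⟨?_, ?_, ?_⟩
  · simp only [(hvx _).deriv]
    rw [hvt.deriv, ((hkx x).mul_const _).deriv]
    field_simp
  · simp only [(hvx _).deriv, (hkx _).deriv]
    rw [hkt.deriv, ((hkx x).fun_mul hkxx).deriv, div_pow, mul_pow, hqq, h22]
    field_simp
    ring
  · rw [hv, hk, div_pow, mul_pow, hqq, h22]
    field_simp
    ring
end

section
/- Let d_1, d_2, d_3 > 0. Define s: ℝ^2 → ℝ by s(u_1,u_2) = √( (1+u_1+u_2)^2 - 4 u_1 u_2 ) when u_1 ≥ 0 and u_2 ≥ 0, and s(u_1,u_2) = 1 + u_1 + u_2 otherwise, and define A: ℝ^2 → ℝ^2 by A(u) = ½( (d_1+d_3) u_1 + (d_3-d_1)(1 + u_2 - s(u)), (d_2+d_3) u_2 + (d_3-d_2)(1 + u_1 - s(u)) ). Then A is strongly monotone, i.e. there exists a > 0 with ⟨A(u) - A(ũ), u - ũ⟩ ≥ a ‖u - ũ‖^2 for all u, ũ ∈ ℝ^2, if and only if (3 - 2√2) d_3 < d_j < (3 + 2√2) d_3 for j = 1, 2. -/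
/-!
Put `h = u₁ - v₁`, `k = u₂ - v₂` and `δ = s u - s v`. The monotonicity pairing is the function
`fluxPairing d₁ d₂ d₃ h k δ`, which is affine in `δ`. The gradient of `s` takes its values in the
triangle with vertices `(1, 1)`, `(1, -1)`, `(-1, 1)`, so `δ` lies between the least and the
greatest of `h + k`, `h - k`, `k - h` (`extS_sub_le`). Hence the pairing is bounded below by its
smallest value at these three choices of `δ`, which are the quadratic forms
`d₁ h² + d₂ k²`, `d₁ h² + (d₃ - d₁) h k + d₃ k²` and `d₃ h² + (d₃ - d₂) h k + d₂ k²`.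
The last two are positive definite exactly when `(d₃ - d_j)² < 4 d_j d₃`, which is the stated
condition on `d_j / d₃` (`discr_iff`).

Conversely, the vertex `(1, -1)` is approached along `u₁ → ∞` with `u₂` bounded (`extS_far`), so
strong monotonicity passes to the second form; the third one follows by exchanging the species.
-/

/-- The extended square root `s` of the statement, as a function on `ℝ × ℝ` in curried form. -/
noncomputable def extS (x y : ℝ) : ℝ :=
  if 0 ≤ x ∧ 0 ≤ y then Real.sqrt ((1 + x + y) ^ 2 - 4 * x * y) else 1 + x + y

/-- The pairing `⟨A u - A v, u - v⟩` in terms of `h = u₁ - v₁`, `k = u₂ - v₂` and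
`δ = s u - s v`. -/
noncomputable def fluxPairing (d₁ d₂ d₃ h k δ : ℝ) : ℝ :=
  ((d₁ + d₃) * h ^ 2 + (d₃ - d₁) * h * (k - δ) + (d₂ + d₃) * k ^ 2 + (d₃ - d₂) * k * (h - δ)) / 2

lemma extS_comm (x y : ℝ) : extS x y = extS y x := by
  unfold extS
  rw [show (1 + x + y) ^ 2 - 4 * x * y = (1 + y + x) ^ 2 - 4 * y * x by ring,
    show 1 + x + y = 1 + y + x by ring]
  simp only [and_comm]

lemma extS_le (x y : ℝ) : extS x y ≤ 1 + x + y := by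
  unfold extS
  split_ifs with h
  · obtain ⟨hx, hy⟩ := h
    exact Real.sqrt_le_iff.mpr ⟨by positivity, by nlinarith [mul_nonneg hx hy]⟩
  · exact le_rfl

lemma one_add_abs_le_extS {x y : ℝ} (hx : 0 ≤ x) (hy : 0 ≤ y) : 1 + |x - y| ≤ extS x y := by
  rw [extS, if_pos ⟨hx, hy⟩]
  apply Real.le_sqrt_of_sq_le
  rcases abs_cases (x - y) with ⟨h, _⟩ | ⟨h, _⟩ <;> rw [h] <;> nlinarith

lemma extS_sq {x y : ℝ} (hx : 0 ≤ x) (hy : 0 ≤ y) :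
    extS x y ^ 2 = 1 + 2 * (x + y) + |x - y| ^ 2 := by
  rw [extS, if_pos ⟨hx, hy⟩, Real.sq_sqrt (by nlinarith [sq_nonneg (x - y)]), sq_abs]
  ring

/-- An increment of `extS` is at most the greatest of its values predicted by the three extreme
gradients `(1, 1)`, `(1, -1)`, `(-1, 1)`. -/
lemma extS_sub_le (x y x' y' : ℝ) :
    extS x y - extS x' y' ≤ max ((x - x') + (y - y')) |(x - x') - (y - y')| := by
  set m := max ((x - x') + (y - y')) |(x - x') - (y - y')| with hm
  have hsum : (x - x') + (y - y') ≤ m := le_max_left _ _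
  have hdiff : |(x - x') - (y - y')| ≤ m := le_max_right _ _
  have hm0 : 0 ≤ m := (abs_nonneg _).trans hdiff
  have habs : |x - y| ≤ |x' - y'| + m := by
    have := abs_add_le (x' - y') ((x - x') - (y - y'))
    rw [show x' - y' + ((x - x') - (y - y')) = x - y by ring] at this
    linarith
  by_cases hv : 0 ≤ x' ∧ 0 ≤ y'
  · have h1 := one_add_abs_le_extS hv.1 hv.2
    have h2 := extS_sq hv.1 hv.2
    have h0 := abs_nonneg (x' - y')
    by_cases hu : 0 ≤ x ∧ 0 ≤ y
    · have h3 := extS_sq hu.1 hu.2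
      have h4 : |x - y| ^ 2 ≤ (|x' - y'| + m) ^ 2 := by gcongr
      have : extS x y ≤ extS x' y' + m := by
        apply le_of_sq_le_sq _ (by linarith)
        nlinarith
      linarith
    · -- A negative coordinate forces `x + y ≤ |x - y|`.
      have h5 : x + y ≤ |x - y| := by
        rcases not_and_or.mp hu with h | h
        · exact le_trans (by linarith) (neg_le_abs (x - y))
        · exact le_trans (by linarith) (le_abs_self (x - y))
      linarith [extS_le x y]
  · have h6 : extS x' y' = 1 + x' + y' := if_neg hv
    linarith [extS_le x y]

/-- Every displacement `(h, k)` is realised by pairs of points, far out along the first axis,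
whose `extS`-increment is as close to `h - k` as desired. -/
lemma extS_far (h k η : ℝ) (hη : 0 < η) :
    ∃ x y, |extS (x + h) (y + k) - extS x y - (h - k)| ≤ η := by
  -- For `0 ≤ p = x - y` one has `s² = (1 + p)² + 4 y`, hence `1 + p ≤ s ≤ 1 + p + 2 y / (1 + p)`.
  have key : ∀ x y : ℝ, 0 ≤ y → y ≤ x → 2 * y ≤ η * (1 + (x - y)) →
      1 + (x - y) ≤ extS x y ∧ extS x y ≤ 1 + (x - y) + η := by
    intro x y hy hxy hb
    have hx : 0 ≤ x := hy.trans hxy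
    refine ⟨by simpa [abs_of_nonneg (sub_nonneg.mpr hxy)] using one_add_abs_le_extS hx hy, ?_⟩
    apply le_of_sq_le_sq _ (by linarith)
    rw [extS_sq hx hy, sq_abs]
    nlinarith
  have hk := abs_nonneg k
  have hh := abs_nonneg h
  have hk1 := neg_abs_le k
  have hk2 := le_abs_self k
  have hh1 := neg_abs_le h
  have hq : 0 ≤ 4 * |k| / η := by positivity
  have hqe : η * (4 * |k| / η) = 4 * |k| := by field_simp
  refine ⟨2 * |k| + |h| + 4 * |k| / η, |k|, ?_⟩
  obtain ⟨a1, a2⟩ := key (2 * |k| + |h| + 4 * |k| / η) |k| hk (by linarith) (by nlinarith)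
  obtain ⟨b1, b2⟩ := key (2 * |k| + |h| + 4 * |k| / η + h) (|k| + k) (by linarith) (by linarith)
    (by nlinarith [mul_nonneg hη.le (by linarith : (0:ℝ) ≤ 1 + (|h| + h) + (|k| - k))])
  rw [abs_le]
  constructor <;> linarith

lemma discr_iff {d e : ℝ} (he : 0 < e) :
    (3 - 2 * Real.sqrt 2) * e < d ∧ d < (3 + 2 * Real.sqrt 2) * e ↔ (e - d) ^ 2 < 4 * d * e := by
  have h2 : Real.sqrt 2 ^ 2 = 2 := Real.sq_sqrt (by norm_num)
  have h0 : 0 < Real.sqrt 2 := by positivity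
  have hr : 0 < 2 * Real.sqrt 2 * e := by positivity
  have : (e - d) ^ 2 < 4 * d * e ↔ (d - 3 * e) ^ 2 < (2 * Real.sqrt 2 * e) ^ 2 := by
    rw [mul_pow, mul_pow, h2]
    constructor <;> intro h <;> nlinarith
  rw [this, sq_lt_sq, abs_of_pos hr, abs_lt]
  constructor <;> rintro ⟨_, _⟩ <;> constructor <;> linarith

/-- A positive definite binary form is coercive, with constant `det / trace`. -/
lemma form_coercive {α β γ : ℝ} (hα : 0 < α) (hγ : 0 < γ) (hdet : β ^ 2 < 4 * α * γ) :
    ∃ a, 0 < a ∧ ∀ x y : ℝ, a * (x ^ 2 + y ^ 2) ≤ α * x ^ 2 + β * x * y + γ * y ^ 2 := by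
  refine ⟨(α * γ - (β / 2) ^ 2) / (α + γ), div_pos (by nlinarith) (by linarith), fun x y => ?_⟩
  rw [div_mul_eq_mul_div, div_le_iff₀ (by linarith)]
  nlinarith [sq_nonneg (α * x + β / 2 * y), sq_nonneg (β / 2 * x + γ * y)]

/-- Strong monotonicity forces the quadratic form belonging to the limiting gradient `(1, -1)`
to be positive definite. -/
lemma discr_lt_of_monotone {d₁ d₂ d₃ a : ℝ} (hd₃ : 0 < d₃) (ha : 0 < a)
    (H : ∀ x y x' y' : ℝ, a * ((x - x') ^ 2 + (y - y') ^ 2) ≤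
      fluxPairing d₁ d₂ d₃ (x - x') (y - y') (extS x y - extS x' y')) :
    (d₃ - d₁) ^ 2 < 4 * d₁ * d₃ := by
  have lim : ∀ h k : ℝ, a * (h ^ 2 + k ^ 2) ≤ d₁ * h ^ 2 + (d₃ - d₁) * h * k + d₃ * k ^ 2 := by
    intro h k
    apply le_of_forall_pos_le_add
    intro ε hε
    set c := ((d₃ - d₁) * h + (d₃ - d₂) * k) / 2 with hc
    have hc1 : 0 < |c| + 1 := by positivity
    obtain ⟨x, y, hxy⟩ := extS_far h k (ε / (|c| + 1)) (by positivity)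
    have h1 := H (x + h) (y + k) x y
    simp only [add_sub_cancel_left] at h1
    set δ := extS (x + h) (y + k) - extS x y
    have h2 : fluxPairing d₁ d₂ d₃ h k δ =
        d₁ * h ^ 2 + (d₃ - d₁) * h * k + d₃ * k ^ 2 - c * (δ - (h - k)) := by
      unfold fluxPairing
      rw [hc]
      ring
    have h3 : |c * (δ - (h - k))| ≤ ε := by
      rw [abs_mul]
      calc |c| * |δ - (h - k)| ≤ (|c| + 1) * (ε / (|c| + 1)) := by
            gcongr
            linarith
        _ = ε := by field_simp
    linarith [neg_abs_le (c * (δ - (h - k)))]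
  -- For `h = 2 d₃` the form is minimal at `k = d₁ - d₃`, with value
  -- `d₃ (4 d₁ d₃ - (d₃ - d₁)²)`.
  have h1 := lim (2 * d₃) (d₁ - d₃)
  have h2 : 0 < a * ((2 * d₃) ^ 2 + (d₁ - d₃) ^ 2) := by positivity
  have h3 : 0 < d₃ * (4 * d₁ * d₃ - (d₃ - d₁) ^ 2) := by nlinarith
  linarith [(mul_pos_iff_of_pos_left hd₃).mp h3]

/-- A function affine in `t` that is at least `B` at `p`, `q` and `r` is at least `B` wherever
`t` lies between the least and the greatest of the three. -/
lemma affine_ge {A c B p q r t : ℝ} (hp : B ≤ A - c * p) (hq : B ≤ A - c * q)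
    (hr : B ≤ A - c * r) (hub : t ≤ max p (max q r)) (hlb : min p (min q r) ≤ t) :
    B ≤ A - c * t := by
  rcases le_total 0 c with hc | hc
  · rcases le_max_iff.mp hub with h | h
    · nlinarith
    · rcases le_max_iff.mp h with h | h <;> nlinarith
  · rcases min_le_iff.mp hlb with h | h
    · nlinarith
    · rcases min_le_iff.mp h with h | h <;> nlinarith

lemma monotone_of_discr {d₁ d₂ d₃ : ℝ} (hd₁ : 0 < d₁) (hd₂ : 0 < d₂) (hd₃ : 0 < d₃)
    (h₁ : (d₃ - d₁) ^ 2 < 4 * d₁ * d₃) (h₂ : (d₃ - d₂) ^ 2 < 4 * d₂ * d₃) :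
    ∃ a, 0 < a ∧ ∀ x y x' y' : ℝ, a * ((x - x') ^ 2 + (y - y') ^ 2) ≤
      fluxPairing d₁ d₂ d₃ (x - x') (y - y') (extS x y - extS x' y') := by
  obtain ⟨a₀, ha₀, H₀⟩ := form_coercive (β := 0) hd₁ hd₂ (by nlinarith [mul_pos hd₁ hd₂])
  obtain ⟨a₁, ha₁, H₁⟩ := form_coercive hd₁ hd₃ h₁
  obtain ⟨a₂, ha₂, H₂⟩ := form_coercive hd₃ hd₂ (β := d₃ - d₂) (by linarith)
  refine ⟨min a₀ (min a₁ a₂), by positivity, fun x y x' y' => ?_⟩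
  have hub := extS_sub_le x y x' y'
  have hlb := extS_sub_le x' y' x y
  rw [show x' - x + (y' - y) = -(x - x' + (y - y')) by ring,
    show x' - x - (y' - y) = -(x - x' - (y - y')) by ring, abs_neg] at hlb
  set δ := extS x y - extS x' y' with hδ
  rw [show extS x' y' - extS x y = -δ by rw [hδ]; ring] at hlb
  generalize x - x' = h at *
  generalize y - y' = k at *
  have hn : 0 ≤ h ^ 2 + k ^ 2 := by positivity
  have m₀ := (mul_le_mul_of_nonneg_right (min_le_left a₀ (min a₁ a₂)) hn).trans (H₀ h k)
  have m₁ := (mul_le_mul_of_nonneg_right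
    ((min_le_right a₀ (min a₁ a₂)).trans (min_le_left a₁ a₂)) hn).trans (H₁ h k)
  have m₂ := (mul_le_mul_of_nonneg_right
    ((min_le_right a₀ (min a₁ a₂)).trans (min_le_right a₁ a₂)) hn).trans (H₂ h k)
  set B := min a₀ (min a₁ a₂) * (h ^ 2 + k ^ 2)
  have e : ∀ t, fluxPairing d₁ d₂ d₃ h k t =
      ((d₁ + d₃) * h ^ 2 + (d₂ + d₃) * k ^ 2 + (2 * d₃ - d₁ - d₂) * h * k) / 2 -
        ((d₃ - d₁) * h + (d₃ - d₂) * k) / 2 * t := by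
    intro t
    unfold fluxPairing
    ring
  rw [e]
  apply affine_ge (p := h + k) (q := h - k) (r := -(h - k))
  · linarith
  · linarith
  · linarith
  · exact hub
  · rw [abs_eq_max_neg, max_comm (h - k)] at hlb
    have := neg_le_neg hlb
    rw [neg_neg, ← min_neg_neg, ← min_neg_neg, neg_neg, neg_neg] at this
    exact this

/-- For the reaction `X₃ ⇌ X₁ + X₂`, the reduced flux map `A = Q D Ψ` on `ℝ²`
is strongly monotone if and only if `(3 - 2√2) d₃ < d_j < (3 + 2√2) d₃` for
`j = 1, 2`. -/
theorem three_species_flux_monotone_iff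
    (d₁ d₂ d₃ : ℝ) (hd₁ : 0 < d₁) (hd₂ : 0 < d₂) (hd₃ : 0 < d₃)
    (s : ℝ → ℝ → ℝ)
    (hs : ∀ u₁ u₂ : ℝ, s u₁ u₂ =
      if 0 ≤ u₁ ∧ 0 ≤ u₂ then Real.sqrt ((1 + u₁ + u₂) ^ 2 - 4 * u₁ * u₂)
      else 1 + u₁ + u₂)
    (A₁ A₂ : ℝ → ℝ → ℝ)
    (hA₁ : ∀ u₁ u₂ : ℝ, A₁ u₁ u₂ =
      ((d₁ + d₃) * u₁ + (d₃ - d₁) * (1 + u₂ - s u₁ u₂)) / 2)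
    (hA₂ : ∀ u₁ u₂ : ℝ, A₂ u₁ u₂ =
      ((d₂ + d₃) * u₂ + (d₃ - d₂) * (1 + u₁ - s u₁ u₂)) / 2) :
    (∃ a : ℝ, 0 < a ∧ ∀ u₁ u₂ v₁ v₂ : ℝ,
        (A₁ u₁ u₂ - A₁ v₁ v₂) * (u₁ - v₁) + (A₂ u₁ u₂ - A₂ v₁ v₂) * (u₂ - v₂)
          ≥ a * ((u₁ - v₁) ^ 2 + (u₂ - v₂) ^ 2))
    ↔ ((3 - 2 * Real.sqrt 2) * d₃ < d₁ ∧ d₁ < (3 + 2 * Real.sqrt 2) * d₃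
        ∧ (3 - 2 * Real.sqrt 2) * d₃ < d₂ ∧ d₂ < (3 + 2 * Real.sqrt 2) * d₃) := by
  obtain rfl : s = extS := by
    funext x y
    exact hs x y
  have E : ∀ u₁ u₂ v₁ v₂ : ℝ,
      (A₁ u₁ u₂ - A₁ v₁ v₂) * (u₁ - v₁) + (A₂ u₁ u₂ - A₂ v₁ v₂) * (u₂ - v₂) =
        fluxPairing d₁ d₂ d₃ (u₁ - v₁) (u₂ - v₂) (extS u₁ u₂ - extS v₁ v₂) := by
    intro u₁ u₂ v₁ v₂
    rw [hA₁, hA₁, hA₂, hA₂, fluxPairing]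
    ring
  simp only [E, ge_iff_le]
  rw [← and_assoc, discr_iff hd₃, discr_iff hd₃]
  constructor
  · rintro ⟨a, ha, H⟩
    refine ⟨discr_lt_of_monotone hd₃ ha H,
      discr_lt_of_monotone (d₂ := d₁) hd₃ ha fun x y x' y' => ?_⟩
    have := H y x y' x'
    rw [extS_comm y x, extS_comm y' x'] at this
    unfold fluxPairing at this ⊢
    linarith
  · rintro ⟨h₁, h₂⟩
    exact monotone_of_discr hd₁ hd₂ hd₃ h₁ h₂
end
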